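/- Let Π be a DatalogMTL program in normal form, D a dataset, q a query, and (Π′,D′) = MagicRewriting(Π,D,q). Then every rule of Π′ contains at least one body atom whose predicate is a magic predicate. Consequently, for every dataset D₀ containing no facts with magic predicates, T_{Π′}(ℑ_{D₀}) = ℑ_{D₀}. -/

import Mathlib

/-!
Every rule of the first type carries, as its first body atom, a diamond over a magic relational
atom. A rule of the second type keeps the part of such a body strictly to the left of an atom
containing an adorned predicate; the leading diamond contains none, so it survives the truncation
(`exists_guard_of_mem_magicProgram`). Removing adornments does not touch magic predicates.

An existential diamond over an atom with a magic predicate fails everywhere in the least model of a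
dataset without magic facts. Hence no rule fires there, so that least model already satisfies the
closure condition defining `TP`, which is therefore equal to it. Having the guard as a diamond is
essential: an arbitrary metric atom mentioning a magic predicate (for instance the left argument of
an `until_` whose witness is the current time point) could hold without any magic fact.
-/

/-! # DatalogMTL: syntax, semantics, and the magic-set rewriting -/

/-- Terms: variables and constants (names are strings). -/
inductive Term where
  | var (v : String)
  | const (c : String)
deriving DecidableEq

/-- An adornment is a list of booleans (`true` = bound `b`, `false` = free `f`). -/
abbrev Adornment := List Bool

/-- Predicates: the base predicates of the input, adorned predicates `R^γ`
(used during the rewriting), and the fresh magic predicates `m_R^γ`. -/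
inductive PredSym where
  | base (name : String)
  | adorned (name : String) (γ : Adornment)
  | magic (name : String) (γ : Adornment)
deriving DecidableEq

/-- An interval of rationals, given by optional endpoints (`none` = infinite)
and openness flags. -/
structure Ivl where
  lo : Option ℚ
  hi : Option ℚ
  loOpen : Bool
  hiOpen : Bool
deriving DecidableEq

namespace Ivl

/-- membership of a time point in an interval -/
def mem (t : ℚ) (ρ : Ivl) : Prop :=
  (match ρ.lo with
   | none => True
   | some a => if ρ.loOpen then a < t else a ≤ t) ∧
  (match ρ.hi with
   | none => True
   | some b => if ρ.hiOpen then t < b else t ≤ b)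

/-- the punctual interval `[t,t]` -/
def punctual (t : ℚ) : Ivl := ⟨some t, some t, false, false⟩

/-- the interval `(-∞, +∞)` -/
def all : Ivl := ⟨none, none, true, true⟩

/-- nonemptiness of an interval -/
def NE (ρ : Ivl) : Prop := ∃ t, ρ.mem t

/-- an interval containing only non-negative rationals -/
def Nonneg (ρ : Ivl) : Prop := ∀ t, ρ.mem t → 0 ≤ t

/-- a bounded interval (both endpoints rational) -/
def Bounded (ρ : Ivl) : Prop := ρ.lo.isSome ∧ ρ.hi.isSome

end Ivl

/-- Metric atoms. -/
inductive MAtom where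
  | top
  | bot
  | rel (p : PredSym) (ts : List Term)
  | boxPlus (ρ : Ivl) (M : MAtom)
  | boxMinus (ρ : Ivl) (M : MAtom)
  | diaPlus (ρ : Ivl) (M : MAtom)
  | diaMinus (ρ : Ivl) (M : MAtom)
  | until_ (ρ : Ivl) (M₂ M₁ : MAtom)
  | since_ (ρ : Ivl) (M₂ M₁ : MAtom)
deriving DecidableEq

namespace Term

def vars : Term → List String
  | .var v => [v]
  | .const _ => []

end Term

namespace MAtom

/-- variables occurring in a metric atom -/
def vars : MAtom → List String
  | .top | .bot => []
  | .rel _ ts => ts.flatMap Term.vars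
  | .boxPlus _ M | .boxMinus _ M | .diaPlus _ M | .diaMinus _ M => M.vars
  | .until_ _ M₂ M₁ | .since_ _ M₂ M₁ => M₂.vars ++ M₁.vars

/-- predicates occurring in a metric atom -/
def preds : MAtom → List PredSym
  | .top | .bot => []
  | .rel p _ => [p]
  | .boxPlus _ M | .boxMinus _ M | .diaPlus _ M | .diaMinus _ M => M.preds
  | .until_ _ M₂ M₁ | .since_ _ M₂ M₁ => M₂.preds ++ M₁.preds

/-- intervals mentioned by the MTL operators of a metric atom -/
def ivls : MAtom → List Ivl
  | .top | .bot | .rel _ _ => []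
  | .boxPlus ρ M | .boxMinus ρ M | .diaPlus ρ M | .diaMinus ρ M => ρ :: M.ivls
  | .until_ ρ M₂ M₁ | .since_ ρ M₂ M₁ => ρ :: (M₂.ivls ++ M₁.ivls)

/-- a metric atom legal as a rule head: mentions no `⊥`, `◇⁺`, `◇⁻`, `U`, `S` -/
def headOK : MAtom → Prop
  | .top => True
  | .bot => False
  | .rel _ _ => True
  | .boxPlus _ M => M.headOK
  | .boxMinus _ M => M.headOK
  | .diaPlus _ _ | .diaMinus _ _ | .until_ _ _ _ | .since_ _ _ _ => False

/-- well-formedness: all operator intervals are nonempty and contain only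
non-negative rationals -/
def WF : MAtom → Prop
  | .top | .bot | .rel _ _ => True
  | .boxPlus ρ M | .boxMinus ρ M | .diaPlus ρ M | .diaMinus ρ M =>
      ρ.NE ∧ ρ.Nonneg ∧ M.WF
  | .until_ ρ M₂ M₁ | .since_ ρ M₂ M₁ => ρ.NE ∧ ρ.Nonneg ∧ M₂.WF ∧ M₁.WF

/-- applying a substitution (mapping variables to constants) to a metric atom -/
def subst (σ : String → String) : MAtom → MAtom
  | .top => .top
  | .bot => .bot
  | .rel p ts =>
      .rel p (ts.map fun tm => match tm with
        | .var v => .const (σ v)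
        | .const c => .const c)
  | .boxPlus ρ M => .boxPlus ρ (M.subst σ)
  | .boxMinus ρ M => .boxMinus ρ (M.subst σ)
  | .diaPlus ρ M => .diaPlus ρ (M.subst σ)
  | .diaMinus ρ M => .diaMinus ρ (M.subst σ)
  | .until_ ρ M₂ M₁ => .until_ ρ (M₂.subst σ) (M₁.subst σ)
  | .since_ ρ M₂ M₁ => .since_ ρ (M₂.subst σ) (M₁.subst σ)

/-- an atom without MTL operators -/
def isBasic : MAtom → Prop
  | .top | .bot | .rel _ _ => True
  | _ => False

/-- no nested MTL operators -/
def nonNested : MAtom → Prop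
  | .top | .bot | .rel _ _ => True
  | .boxPlus _ M | .boxMinus _ M | .diaPlus _ M | .diaMinus _ M => M.isBasic
  | .until_ _ M₂ M₁ | .since_ _ M₂ M₁ => M₂.isBasic ∧ M₁.isBasic

/-- a normal-form head: `⊞_ϱ R(s)` or `⊟_ϱ R(s)` -/
def headNF : MAtom → Prop
  | .boxPlus _ (.rel _ _) => True
  | .boxMinus _ (.rel _ _) => True
  | _ => False

/-- whether a magic predicate occurs in the atom -/
def containsMagic (M : MAtom) : Prop :=
  ∃ p ∈ M.preds, ∃ n γ, p = PredSym.magic n γ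

end MAtom

/-- A rule `head ← body`. -/
structure Rule where
  head : MAtom
  body : List MAtom
deriving DecidableEq

/-- A program is a set of rules (finiteness is part of `ProgramWF`). -/
abbrev Program := Set Rule

/-- A substitution maps variable names to constant names. -/
abbrev Subst := String → String

/-- A fact `R(c)@ϱ`. -/
structure TFact where
  pred : PredSym
  args : List String
  ivl : Ivl
deriving DecidableEq

/-- A dataset is a set of facts (finiteness is part of `DatasetWF`). -/
abbrev Dataset := Set TFact

/-- An interpretation maps each rational time point to a set of ground
relational atoms (predicate together with a tuple of constants). -/
abbrev Interp := ℚ → Set (PredSym × List String)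

/-- Satisfaction of a (ground) metric atom at a time point. -/
def satAt (ℑ : Interp) : ℚ → MAtom → Prop
  | _, .top => True
  | _, .bot => False
  | t, .rel p ts => ∃ cs : List String, ts = cs.map Term.const ∧ (p, cs) ∈ ℑ t
  | t, .boxPlus ρ M => ∀ t₁ : ℚ, Ivl.mem (t₁ - t) ρ → satAt ℑ t₁ M
  | t, .boxMinus ρ M => ∀ t₁ : ℚ, Ivl.mem (t - t₁) ρ → satAt ℑ t₁ M
  | t, .diaPlus ρ M => ∃ t₁ : ℚ, Ivl.mem (t₁ - t) ρ ∧ satAt ℑ t₁ M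
  | t, .diaMinus ρ M => ∃ t₁ : ℚ, Ivl.mem (t - t₁) ρ ∧ satAt ℑ t₁ M
  | t, .until_ ρ M₂ M₁ =>
      ∃ t₁ : ℚ, Ivl.mem (t₁ - t) ρ ∧ satAt ℑ t₁ M₁ ∧
        ∀ t₂ : ℚ, t < t₂ → t₂ < t₁ → satAt ℑ t₂ M₂
  | t, .since_ ρ M₂ M₁ =>
      ∃ t₁ : ℚ, Ivl.mem (t - t₁) ρ ∧ satAt ℑ t₁ M₁ ∧
        ∀ t₂ : ℚ, t₁ < t₂ → t₂ < t → satAt ℑ t₂ M₂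

/-- Satisfaction of a fact. -/
def satFact (ℑ : Interp) (g : TFact) : Prop :=
  ∀ t : ℚ, Ivl.mem t g.ivl → (g.pred, g.args) ∈ ℑ t

/-- An interpretation satisfies a rule if it satisfies all its ground instances. -/
def modelsRule (ℑ : Interp) (r : Rule) : Prop :=
  ∀ σ : Subst, ∀ t : ℚ,
    (∀ M ∈ r.body, satAt ℑ t (M.subst σ)) → satAt ℑ t (r.head.subst σ)

/-- model of a program -/
def modelsProg (ℑ : Interp) (P : Program) : Prop := ∀ r ∈ P, modelsRule ℑ r

/-- model of a dataset -/
def modelsData (ℑ : Interp) (D : Dataset) : Prop := ∀ g ∈ D, satFact ℑ g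

/-- Entailment `(P, D) ⊨ g`. -/
def entails (P : Program) (D : Dataset) (g : TFact) : Prop :=
  ∀ ℑ : Interp, modelsProg ℑ P → modelsData ℑ D → satFact ℑ g

/-- The least model `ℑ_D` of a dataset. -/
def leastModel (D : Dataset) : Interp :=
  fun t => {a | ∃ g ∈ D, g.pred = a.1 ∧ g.args = a.2 ∧ Ivl.mem t g.ivl}

/-- The immediate consequence operator `T_P`: the least interpretation
containing `ℑ` such that whenever the body of a ground instance of a rule of
`P` holds in `ℑ` at `t`, its head holds in the result at `t`. -/
def TP (P : Program) (ℑ : Interp) : Interp :=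
  fun t =>
    ⋂ J ∈ {J : Interp |
      (∀ u : ℚ, ℑ u ⊆ J u) ∧
      ∀ r ∈ P, ∀ σ : Subst, ∀ u : ℚ,
        (∀ M ∈ r.body, satAt ℑ u (M.subst σ)) → satAt J u (r.head.subst σ)},
    J t

/-- The (finite) iterates `ℑ₀ = ℑ_D`, `ℑ_{i+1} = T_P(ℑ_i)` of a pair `(P,D)`. -/
def iterates (P : Program) (D : Dataset) : ℕ → Interp
  | 0 => leastModel D
  | n + 1 => TP P (iterates P D n)

/-- `g` has birth round `i` regarding `(P,D)`. -/
def birthEq (g : TFact) (P : Program) (D : Dataset) (i : ℕ) : Prop :=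
  satFact (iterates P D i) g ∧ (i = 0 ∨ ¬ satFact (iterates P D (i - 1)) g)

/-- `g` has a (finite) birth round regarding `(P,D)`. -/
def hasBirth (g : TFact) (P : Program) (D : Dataset) : Prop :=
  ∃ i : ℕ, birthEq g P D i

/-- The canonical interpretation `C_{P,D}` (the least model of `(P,D)`). -/
def canonInterp (P : Program) (D : Dataset) : Interp :=
  fun t => ⋂ J ∈ {J : Interp | modelsProg J P ∧ modelsData J D}, J t

/-- well-formed rule: nonempty body, legal well-formed head and body, safe -/
def RuleWF (r : Rule) : Prop :=
  r.body ≠ [] ∧ r.head.headOK ∧ r.head.WF ∧ (∀ M ∈ r.body, M.WF) ∧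
  (∀ v ∈ r.head.vars, ∃ M ∈ r.body, v ∈ M.vars)

/-- all predicates of the rule are base predicates (magic and adorned
predicates are fresh) -/
def Rule.predsBase (r : Rule) : Prop :=
  ∀ p ∈ r.head.preds ++ r.body.flatMap MAtom.preds, ∃ n, p = PredSym.base n

/-- well-formed program: finite set of well-formed safe rules over base predicates -/
def ProgramWF (P : Program) : Prop :=
  P.Finite ∧ ∀ r ∈ P, RuleWF r ∧ r.predsBase

/-- well-formed dataset: finite set of facts with nonempty intervals, over base
predicates -/
def DatasetWF (D : Dataset) : Prop :=
  D.Finite ∧ ∀ g ∈ D, g.ivl.NE ∧ ∃ n, g.pred = PredSym.base n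

/-- normal form: no nested operators and every head of the form `⊞_ϱ R(s)`
or `⊟_ϱ R(s)` -/
def NormalForm (P : Program) : Prop :=
  ∀ r ∈ P, r.head.headNF ∧ ∀ M ∈ r.body, M.nonNested

/-- bounded program -/
def ProgramBounded (P : Program) : Prop :=
  ∀ r ∈ P, ∀ ρ ∈ r.head.ivls ++ r.body.flatMap MAtom.ivls, ρ.Bounded

/-- bounded dataset -/
def DatasetBounded (D : Dataset) : Prop := ∀ g ∈ D, g.ivl.Bounded

/-! ## The magic-set rewriting -/

/-- `bt(s,γ)`: the subsequence of terms of `s` bound according to `γ` -/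
def bt (ts : List Term) (γ : Adornment) : List Term :=
  ((ts.zip γ).filter fun p => p.2).map Prod.fst

/-- `bv(s,γ)`: the subsequence of variables of `s` bound according to `γ` -/
def bv (ts : List Term) (γ : Adornment) : List Term :=
  (bt ts γ).filter fun tm => match tm with | .var _ => true | .const _ => false

/-- `bt` on a ground tuple of constants -/
def btC (cs : List String) (γ : Adornment) : List String :=
  ((cs.zip γ).filter fun p => p.2).map Prod.fst

/-- the adornment of the query: `b` exactly at the positions holding constants -/
def adornOfTerms (ts : List Term) : Adornment :=
  ts.map fun tm => match tm with | .const _ => true | .var _ => false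

/-- adornment of a tuple given the list `B` of bound variables: constants and
variables from `B` are bound -/
def adornTerms (B : List String) (ts : List Term) : Adornment :=
  ts.map fun tm => match tm with | .const _ => true | .var v => B.contains v

/-- the head predicate name of a (normal-form) rule -/
def headName (r : Rule) : Option String :=
  match r.head with
  | .boxPlus _ (.rel (.base n) _) => some n
  | .boxMinus _ (.rel (.base n) _) => some n
  | .rel (.base n) _ => some n
  | _ => none

/-- the argument tuple of the head of a (normal-form) rule -/
def headArgs (r : Rule) : List Term :=
  match r.head with
  | .boxPlus _ (.rel _ ts) => ts
  | .boxMinus _ (.rel _ ts) => ts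
  | .rel _ ts => ts
  | _ => []

/-- `n` is an idb predicate in `P`: it occurs in the head of some rule -/
def isIdbName (P : Program) (n : String) : Prop :=
  ∃ r ∈ P, headName r = some n

/-- adorn a base predicate occurring with argument tuple `ts`, given
bound variables `B` -/
def adornPredOf (B : List String) (p : PredSym) (ts : List Term) : PredSym :=
  match p with
  | .base n => .adorned n (adornTerms B ts)
  | _ => p

/-- adorn all relational atoms of a metric atom, given bound variables `B` -/
def MAtom.adornWith (B : List String) : MAtom → MAtom
  | .top => .top
  | .bot => .bot
  | .rel p ts => .rel (adornPredOf B p ts) ts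
  | .boxPlus ρ M => .boxPlus ρ (M.adornWith B)
  | .boxMinus ρ M => .boxMinus ρ (M.adornWith B)
  | .diaPlus ρ M => .diaPlus ρ (M.adornWith B)
  | .diaMinus ρ M => .diaMinus ρ (M.adornWith B)
  | .until_ ρ M₂ M₁ => .until_ ρ (M₂.adornWith B) (M₁.adornWith B)
  | .since_ ρ M₂ M₁ => .since_ ρ (M₂.adornWith B) (M₁.adornWith B)

/-- adorn the head of a (normal-form) rule with `γ` -/
def adornHead (γ : Adornment) : MAtom → MAtom
  | .boxPlus ρ (.rel (.base n) ts) => .boxPlus ρ (.rel (.adorned n γ) ts)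
  | .boxMinus ρ (.rel (.base n) ts) => .boxMinus ρ (.rel (.adorned n γ) ts)
  | M => M

/-- variables of the head bound according to `γ` -/
def headBoundVars (r : Rule) (γ : Adornment) : List String :=
  (bv (headArgs r) γ).flatMap Term.vars

/-- the adorned version of rule `r` for head adornment `γ`: an occurrence of
a variable in the `i`-th body atom is bound iff the variable is bound in the
head or occurs in a body atom strictly to the left -/
def adornRule (r : Rule) (γ : Adornment) : Rule :=
  ⟨adornHead γ r.head,
   r.body.mapIdx fun i M =>
     M.adornWith (headBoundVars r γ ++ (r.body.take i).flatMap MAtom.vars)⟩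

/-- the adorned idb predicates reachable by the adornment procedure started
from `Q^{γ₀}` -/
inductive Reach (P : Program) (Q : String) (γ₀ : Adornment) :
    String → Adornment → Prop where
  | init : Reach P Q γ₀ Q γ₀
  | step {R : String} {γ : Adornment} {S : String} {γ' : Adornment} (r : Rule) :
      Reach P Q γ₀ R γ → r ∈ P → headName r = some R →
      (∃ M ∈ (adornRule r γ).body, PredSym.adorned S γ' ∈ M.preds) →
      isIdbName P S →
      Reach P Q γ₀ S γ'

/-- the adorned program `P_a` -/
def adornedProg (P : Program) (Q : String) (γ₀ : Adornment) : Set Rule :=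
  {ra | ∃ r ∈ P, ∃ R γ, Reach P Q γ₀ R γ ∧ headName r = some R ∧
    ra = adornRule r γ}

/-- the magic body atom added for an adorned head -/
def magicBodyAtom : MAtom → Option MAtom
  | .boxPlus ρ (.rel (.adorned R γ) s) =>
      some (.diaPlus ρ (.rel (.magic R γ) (bv s γ)))
  | .boxMinus ρ (.rel (.adorned R γ) s) =>
      some (.diaMinus ρ (.rel (.magic R γ) (bv s γ)))
  | _ => none

/-- the rules `P1x` of the first type -/
def magicProg1 (Pa : Set Rule) : Set Rule :=
  {r' | ∃ r ∈ Pa, ∃ m, magicBodyAtom r.head = some m ∧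
    r' = ⟨r.head, m :: r.body⟩}

open Classical in
/-- replacing every adorned idb relational atom `R^γ(s)` by `m_R^γ(bv(s,γ))` -/
noncomputable def magicize (P : Program) : MAtom → MAtom
  | .top => .top
  | .bot => .bot
  | .rel p ts =>
      match p with
      | .adorned n γ =>
          if isIdbName P n then .rel (.magic n γ) (bv ts γ) else .rel (.adorned n γ) ts
      | _ => .rel p ts
  | .boxPlus ρ M => .boxPlus ρ (magicize P M)
  | .boxMinus ρ M => .boxMinus ρ (magicize P M)
  | .diaPlus ρ M => .diaPlus ρ (magicize P M)
  | .diaMinus ρ M => .diaMinus ρ (magicize P M)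
  | .until_ ρ M₂ M₁ => .until_ ρ (magicize P M₂) (magicize P M₁)
  | .since_ ρ M₂ M₁ => .since_ ρ (magicize P M₂) (magicize P M₁)

/-- `MagicHeadAtoms` -/
noncomputable def magicHeadAtoms (P : Program) (M : MAtom) : Set MAtom :=
  match magicize P M with
  | .boxPlus ρ M₁ => {MAtom.boxPlus ρ M₁}
  | .boxMinus ρ M₁ => {MAtom.boxMinus ρ M₁}
  | .diaPlus ρ M₁ => {MAtom.boxPlus ρ M₁}
  | .diaMinus ρ M₁ => {MAtom.boxMinus ρ M₁}
  | .since_ ρ M₂ M₁ =>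
      {A | (M₂.containsMagic ∧ A = MAtom.boxMinus ⟨some 0, ρ.hi, false, false⟩ M₂) ∨
           (M₁.containsMagic ∧ A = MAtom.boxMinus ρ M₁)}
  | .until_ ρ M₂ M₁ =>
      {A | (M₂.containsMagic ∧ A = MAtom.boxPlus ⟨some 0, ρ.hi, false, false⟩ M₂) ∨
           (M₁.containsMagic ∧ A = MAtom.boxPlus ρ M₁)}
  | M' => {M'}

/-- a (adorned) body atom whose predicate is idb in `P` -/
def atomIdb (P : Program) (M : MAtom) : Prop :=
  ∃ n γ, PredSym.adorned n γ ∈ M.preds ∧ isIdbName P n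

/-- the rules `P2x` of the second type -/
noncomputable def magicProg2 (P : Program) (P1 : Set Rule) : Set Rule :=
  {r' | ∃ r ∈ P1, ∃ i : ℕ, ∃ M, r.body[i]? = some M ∧ atomIdb P M ∧
    ∃ M' ∈ magicHeadAtoms P M, r' = ⟨M', r.body.take i⟩}

/-- deleting adornments from non-magic predicates -/
def PredSym.unadorn : PredSym → PredSym
  | .adorned n _ => .base n
  | p => p

def MAtom.unadorn : MAtom → MAtom
  | .top => .top
  | .bot => .bot
  | .rel p ts => .rel p.unadorn ts
  | .boxPlus ρ M => .boxPlus ρ M.unadorn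
  | .boxMinus ρ M => .boxMinus ρ M.unadorn
  | .diaPlus ρ M => .diaPlus ρ M.unadorn
  | .diaMinus ρ M => .diaMinus ρ M.unadorn
  | .until_ ρ M₂ M₁ => .until_ ρ M₂.unadorn M₁.unadorn
  | .since_ ρ M₂ M₁ => .since_ ρ M₂.unadorn M₁.unadorn

def Rule.unadorn (r : Rule) : Rule :=
  ⟨r.head.unadorn, r.body.map MAtom.unadorn⟩

/-- the program `Pm` produced by `MagicRewriting(P, D, Q(s)@ϱ)`
(it does not depend on `D` nor on `ϱ`) -/
noncomputable def magicProgram (P : Program) (Q : String) (s : List Term) :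
    Set Rule :=
  Rule.unadorn ''
    (magicProg1 (adornedProg P Q (adornOfTerms s)) ∪
     magicProg2 P (magicProg1 (adornedProg P Q (adornOfTerms s))))

def termToConst : Term → String
  | .const c => c
  | .var v => v

/-- the magic fact `m_Q^{γ₀}(bt(s,γ₀))@ϱ` added to the dataset -/
def magicFact (Q : String) (s : List Term) (ρ : Ivl) : TFact :=
  ⟨.magic Q (adornOfTerms s), (bt s (adornOfTerms s)).map termToConst, ρ⟩

/-- the dataset `D′` produced by `MagicRewriting(P, D, Q(s)@ϱ)` -/
def magicDataset (D : Dataset) (Q : String) (s : List Term) (ρ : Ivl) :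
    Dataset :=
  D ∪ {magicFact Q s ρ}

/-- `σ(s)` as a ground tuple of constants -/
def groundTuple (σ : Subst) (s : List Term) : List String :=
  s.map fun tm => match tm with | .var v => σ v | .const c => c

/-- `toRule(R(c)@(−∞,+∞))` is the rule `R(c) ← ⊤` -/
def TFact.toRule (g : TFact) : Rule :=
  ⟨.rel g.pred (g.args.map Term.const), [.top]⟩

/-- `swap(E)` -/
def swapE (E : Set TFact) : Set Rule := TFact.toRule '' E

/-- the rule `m_Q^{γ₀}(bt(s,γ₀)) ← ⊤` -/
def topRule (Q : String) (s : List Term) : Rule :=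
  ⟨.rel (.magic Q (adornOfTerms s)) (bt s (adornOfTerms s)), [.top]⟩

/-- a predicate occurs in a program -/
def predOccursInProg (P : Set Rule) (p : PredSym) : Prop :=
  ∃ r ∈ P, p ∈ r.head.preds ∨ ∃ M ∈ r.body, p ∈ M.preds

/-- a predicate occurs in a dataset -/
def predOccursInData (D : Set TFact) (p : PredSym) : Prop :=
  ∃ g ∈ D, g.pred = p

/-- a magic predicate -/
def PredSym.IsMagic : PredSym → Prop
  | .magic _ _ => True
  | _ => False

/-! ### Magic guards -/

/-- The shape of the atoms guarding the rules of the rewritten program: `◇⁺_ϱ m_R^γ(s)` or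
`◇⁻_ϱ m_R^γ(s)`. -/
def IsMagicGuard (M : MAtom) : Prop :=
  ∃ ρ n γ ts, M = .diaPlus ρ (.rel (.magic n γ) ts) ∨ M = .diaMinus ρ (.rel (.magic n γ) ts)

theorem isMagicGuard_of_magicBodyAtom {h m : MAtom} (hm : magicBodyAtom h = some m) :
    IsMagicGuard m := by
  unfold magicBodyAtom at hm
  split at hm
  · cases hm
    exact ⟨_, _, _, _, Or.inl rfl⟩
  · cases hm
    exact ⟨_, _, _, _, Or.inr rfl⟩
  · cases hm

theorem IsMagicGuard.unadorn {M : MAtom} (h : IsMagicGuard M) : IsMagicGuard M.unadorn := by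
  obtain ⟨ρ, n, γ, ts, rfl | rfl⟩ := h
  · exact ⟨ρ, n, γ, ts, Or.inl rfl⟩
  · exact ⟨ρ, n, γ, ts, Or.inr rfl⟩

theorem IsMagicGuard.exists_pred {M : MAtom} (h : IsMagicGuard M) :
    ∃ p ∈ M.preds, p.IsMagic := by
  obtain ⟨ρ, n, γ, ts, rfl | rfl⟩ := h <;>
    exact ⟨.magic n γ, by simp [MAtom.preds], trivial⟩

theorem IsMagicGuard.not_atomIdb {M : MAtom} (h : IsMagicGuard M) (P : Program) :
    ¬ atomIdb P M := by
  obtain ⟨ρ, n, γ, ts, rfl | rfl⟩ := h <;> simp [atomIdb, MAtom.preds]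

theorem IsMagicGuard.not_satAt {M : MAtom} (h : IsMagicGuard M) {D₀ : Dataset}
    (hD₀ : ∀ g ∈ D₀, ¬ g.pred.IsMagic) (σ : Subst) (t : ℚ) :
    ¬ satAt (leastModel D₀) t (M.subst σ) := by
  obtain ⟨ρ, n, γ, ts, rfl | rfl⟩ := h
  all_goals
    rintro ⟨t₁, -, cs, -, g, hg, hp, -⟩
    apply hD₀ g hg
    have hp' : g.pred = .magic n γ := hp
    rw [hp']
    trivial

theorem exists_guard_of_mem_magicProgram {P : Program} {Q : String} {s : List Term} {r : Rule}
    (hr : r ∈ magicProgram P Q s) : ∃ M ∈ r.body, IsMagicGuard M := by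
  obtain ⟨r', hr' | hr', rfl⟩ := hr
  · obtain ⟨ra, -, m, hm, rfl⟩ := hr'
    exact ⟨m.unadorn, by simp [Rule.unadorn], (isMagicGuard_of_magicBodyAtom hm).unadorn⟩
  · obtain ⟨r₁, ⟨ra, -, m, hm, rfl⟩, i, M, hi, hM, M', -, rfl⟩ := hr'
    have hg := isMagicGuard_of_magicBodyAtom hm
    cases i with
    | zero =>
      -- Position 0 holds the guard itself, whose only predicate is magic, not adorned.
      simp only [List.getElem?_cons_zero, Option.some.injEq] at hi
      exact absurd (hi ▸ hM) (hg.not_atomIdb P)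
    | succ i => exact ⟨m.unadorn, by simp [Rule.unadorn], hg.unadorn⟩

/-- every rule of the rewritten program has a body atom with
a magic predicate; hence on the least model of any dataset without magic
facts, `T_{P′}` derives nothing new. -/
theorem magic_rules_have_magic_body
    (P : Program) (D : Dataset) (Q : String) (s : List Term) (ρ : Ivl)
    (hP : ProgramWF P) (hnf : NormalForm P) (hD : DatasetWF D) :
    (∀ r ∈ magicProgram P Q s, ∃ M ∈ r.body, ∃ p ∈ M.preds, p.IsMagic) ∧
    ∀ D₀ : Dataset, (∀ g ∈ D₀, ¬ g.pred.IsMagic) →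
      TP (magicProgram P Q s) (leastModel D₀) = leastModel D₀ := by
  refine ⟨fun r hr => ?_, fun D₀ hD₀ => ?_⟩
  · obtain ⟨M, hM, hg⟩ := exists_guard_of_mem_magicProgram hr
    exact ⟨M, hM, hg.exists_pred⟩
  · funext t
    apply Set.Subset.antisymm
    · refine Set.biInter_subset_of_mem (t := fun J : Interp => J t) ?_
      refine ⟨fun u => subset_rfl, fun r hr σ u hbody => ?_⟩
      obtain ⟨M, hM, hg⟩ := exists_guard_of_mem_magicProgram hr
      exact absurd (hbody M hM) (hg.not_satAt hD₀ σ u)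
    · exact Set.subset_iInter₂ fun J hJ => hJ.1 t
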